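/- arXiv:1006.2172 — 3 statements merged into one kernel-verified Lean document; each statement's English description precedes it below -/
import Mathlib

section
/- Let f₁, f₂ ∈ C^∞[0,1] with supp(f₁) ⊂ (0,1] and supp(f₂) ⊂ (0,1]. Then there exist u₁ ∈ C³[0,1] with u₁(0) = u₁'(0) = u₁''(0) = 0 and u₂ ∈ C³[0,1] with u₂(0) = 0 such that for all ρ ∈ (0,1]: ρu₁'(ρ) − ρu₂'(ρ) + u₂(ρ) = f₁(ρ) and −u₁'(ρ)/ρ + ρu₂'(ρ) + u₂(ρ) = f₂(ρ). -/
/-- One-sided derivative on `[0,1]`. -/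
noncomputable def dI (f : ℝ → ℂ) (ρ : ℝ) : ℂ := derivWithin f (Set.Icc 0 1) ρ

open Set in
lemma aux_ext (n : ℕ) : ∀ g : ℝ → ℂ, ContDiffOn ℝ n g (Icc 0 1) →
    ∃ k : ℝ → ℂ, ContDiff ℝ n k ∧ ∀ x ∈ Icc (0:ℝ) 1, k x = g x := by
  induction n with
  | zero =>
    intro g hg
    have hc : ContinuousOn g (Icc 0 1) := hg.continuousOn
    refine ⟨IccExtend (zero_le_one (α := ℝ)) ((Icc (0:ℝ) 1).domRestrict g), ?_, ?_⟩
    · have : Continuous (IccExtend (zero_le_one (α := ℝ)) ((Icc (0:ℝ) 1).domRestrict g)) :=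
        (continuousOn_iff_continuous_domRestrict.1 hc).Icc_extend'
      simpa using (contDiff_zero (𝕜 := ℝ)).2 this
    · intro x hx
      rw [IccExtend_of_mem _ _ hx]; rfl
  | succ n ih =>
    intro g hg
    have hu : UniqueDiffOn ℝ (Icc (0:ℝ) 1) := uniqueDiffOn_Icc zero_lt_one
    push_cast at hg
    rw [contDiffOn_succ_iff_derivWithin hu] at hg
    obtain ⟨hd, -, hg'⟩ := hg
    obtain ⟨k, hk, hkg⟩ := ih _ hg'
    have hD : ∀ x, HasDerivAt (fun x => g 0 + ∫ t in (0:ℝ)..x, k t) (k x) x := fun x =>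
      (hk.continuous.integral_hasStrictDerivAt 0 x).hasDerivAt.const_add _
    refine ⟨fun x => g 0 + ∫ t in (0:ℝ)..x, k t, ?_, ?_⟩
    · push_cast
      rw [contDiff_succ_iff_deriv]
      refine ⟨fun x => (hD x).differentiableAt, by simp, ?_⟩
      have : deriv (fun x => g 0 + ∫ t in (0:ℝ)..x, k t) = k := funext fun x => (hD x).deriv
      rw [this]; exact hk
    · apply eq_of_derivWithin_eq (fun x _ => (hD x).differentiableAt.differentiableWithinAt) hd
      · intro x hx
        have hx' := Ico_subset_Icc_self hx
        rw [(hD x).hasDerivWithinAt.derivWithin (hu x hx'), hkg x hx']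
      · simp

open Set in
lemma aux_deriv (k : ℕ) (g : ℝ → ℂ) (hg : ContDiff ℝ 1 g) (x : ℝ) :
    HasDerivAt (fun x => ∫ t in (0:ℝ)..1, ((1 - t : ℝ) : ℂ)^k * g (x + t * (1 - x)))
      (∫ t in (0:ℝ)..1, ((1 - t : ℝ) : ℂ)^(k+1) * deriv g (x + t * (1 - x))) x := by
  have hc : Continuous g := hg.continuous
  have hc' : Continuous (deriv g) := hg.continuous_deriv le_rfl
  have hcF : Continuous (fun p : ℝ × ℝ =>
      ((1 - p.2 : ℝ) : ℂ)^(k+1) * deriv g (p.1 + p.2 * (1 - p.1))) := by fun_prop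
  obtain ⟨C, hC⟩ := ((isCompact_closedBall x 1).prod (isCompact_Icc (a := (0:ℝ)) (b := 1))).exists_bound_of_continuousOn
    hcF.continuousOn
  refine (intervalIntegral.hasDerivAt_integral_of_dominated_loc_of_deriv_le
    (F := fun x t => ((1 - t : ℝ) : ℂ)^k * g (x + t * (1 - x)))
    (F' := fun x t => ((1 - t : ℝ) : ℂ)^(k+1) * deriv g (x + t * (1 - x)))
    (bound := fun _ => C)
    (Metric.closedBall_mem_nhds x one_pos) ?_ ?_ ?_ ?_ ?_ ?_).2
  · refine Filter.Eventually.of_forall fun y => ?_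
    exact Continuous.aestronglyMeasurable (by fun_prop)
  · exact Continuous.intervalIntegrable (by fun_prop) _ _
  · exact Continuous.aestronglyMeasurable (by fun_prop)
  · refine Filter.Eventually.of_forall fun t ht y hy => ?_
    rw [uIoc_of_le zero_le_one] at ht
    exact hC (y, t) ⟨hy, Ioc_subset_Icc_self ht⟩
  · simp
  · refine Filter.Eventually.of_forall fun t ht y hy => ?_
    have h1 : HasDerivAt (fun y : ℝ => y + t * (1 - y)) (1 - t) y := by
      have := (hasDerivAt_id y).add (((hasDerivAt_id y).const_sub 1).const_mul t)
      exact this.congr_deriv (by ring)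
    have h2 := ((hg.differentiable one_ne_zero _).hasDerivAt (x := y + t * (1 - y))).scomp y h1
    have h3 := h2.const_mul (((1 - t : ℝ) : ℂ)^k)
    exact h3.congr_deriv (by rw [Complex.real_smul]; ring)

lemma aux_smooth (n : ℕ) : ∀ (k : ℕ) (g : ℝ → ℂ), ContDiff ℝ n g →
    ContDiff ℝ n (fun x => ∫ t in (0:ℝ)..1, ((1 - t : ℝ) : ℂ)^k * g (x + t * (1 - x))) := by
  induction n with
  | zero =>
    intro k g hg
    have hc : Continuous g := hg.continuous
    have : Continuous (fun x => ∫ t in (0:ℝ)..1, ((1 - t : ℝ) : ℂ)^k * g (x + t * (1 - x))) := by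
      apply intervalIntegral.continuous_parametric_intervalIntegral_of_continuous'
      simp only [Function.uncurry_def]
      fun_prop
    simpa using (contDiff_zero (𝕜 := ℝ)).2 this
  | succ n ih =>
    intro k g hg
    have hg1 : ContDiff ℝ 1 g := hg.of_le (by push_cast; exact le_add_self)
    rw [Nat.cast_add, Nat.cast_one, contDiff_succ_iff_deriv] at hg ⊢
    refine ⟨fun x => (aux_deriv k g hg1 x).differentiableAt, by simp, ?_⟩
    rw [funext fun x => (aux_deriv k g hg1 x).deriv]
    exact ih _ _ hg.2.2

/-- the regular solution of `(1-ρ)h' - h = -g`. -/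
lemma aux_h (n : ℕ) (g : ℝ → ℂ) (hg : ContDiff ℝ (n+1 : ℕ) g) :
    ∃ h : ℝ → ℂ, ContDiff ℝ (n+1 : ℕ) h ∧
      ∀ x : ℝ, (1 - (x:ℂ)) * deriv h x - h x = - g x := by
  have hg1 : ContDiff ℝ 1 g := hg.of_le (by push_cast; exact le_add_self)
  have hc : Continuous g := hg.continuous
  have hc' : Continuous (deriv g) := hg1.continuous_deriv le_rfl
  refine ⟨_, aux_smooth (n+1) 0 g hg, fun x => ?_⟩
  rw [(aux_deriv 0 g hg1 x).deriv]
  have key : ∫ t in (0:ℝ)..1, ((1 - (x:ℂ)) * (((1 - t : ℝ) : ℂ)^(0+1) * deriv g (x + t * (1 - x)))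
      - ((1 - t : ℝ) : ℂ)^0 * g (x + t * (1 - x))) = - g x := by
    rw [intervalIntegral.integral_eq_sub_of_hasDerivAt
      (f := fun t => ((1 - t : ℝ) : ℂ) * g (x + t * (1 - x)))]
    · simp
    · intro t _
      have h0 : HasDerivAt (fun t : ℝ => ((1 - t : ℝ) : ℂ)) ((-1 : ℝ) : ℂ) t :=
        ((hasDerivAt_id t).const_sub 1).ofReal_comp
      have h1 : HasDerivAt (fun t : ℝ => x + t * (1 - x)) (1 - x) t := by
        simpa using ((hasDerivAt_id t).mul_const (1 - x)).const_add x
      have h2 := ((hg1.differentiable one_ne_zero _).hasDerivAt (x := x + t * (1 - x))).scomp t h1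
      refine (h0.mul h2).congr_deriv ?_
      simp only [Complex.real_smul, Function.comp]; push_cast; ring
    · exact Continuous.intervalIntegrable (by fun_prop) _ _
  rw [intervalIntegral.integral_sub, intervalIntegral.integral_const_mul] at key
  · exact key
  · exact Continuous.intervalIntegrable (by fun_prop) _ _
  · exact Continuous.intervalIntegrable (by fun_prop) _ _

open Set in
/-- dividing a function vanishing near `0` by a power of `ρ`. -/
lemma aux_div (m n : ℕ) (f : ℝ → ℂ) (hf : ContDiffOn ℝ n f (Icc 0 1))
    (hs : ∃ δ : ℝ, 0 < δ ∧ ∀ ρ ∈ Icc (0:ℝ) δ, f ρ = 0) :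
    ContDiffOn ℝ n (fun ρ => f ρ / (ρ:ℂ)^m) (Icc 0 1) := by
  obtain ⟨δ, hδ, h⟩ := hs
  intro x hx
  rcases eq_or_lt_of_le hx.1 with h0 | h0
  · subst h0
    refine (contDiffWithinAt_const (c := (0:ℂ))).congr_of_eventuallyEq ?_ (by simp [h 0 ⟨le_rfl, hδ.le⟩])
    filter_upwards [self_mem_nhdsWithin, mem_nhdsWithin_of_mem_nhds (Iio_mem_nhds hδ)] with y hy hy'
    simp [h y ⟨hy.1, le_of_lt hy'⟩]
  · have hx0 : (x:ℂ)^m ≠ 0 := pow_ne_zero _ (by exact_mod_cast h0.ne')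
    have hp : ContDiff ℝ n (fun ρ : ℝ => (ρ:ℂ)^m) := Complex.ofRealCLM.contDiff.pow m
    simp only [div_eq_mul_inv]
    exact (hf x hx).mul (hp.contDiffWithinAt.inv hx0)

theorem stmt_10 (f₁ f₂ : ℝ → ℂ)
    (hf1 : ContDiffOn ℝ (⊤ : ℕ∞) f₁ (Set.Icc 0 1))
    (hf2 : ContDiffOn ℝ (⊤ : ℕ∞) f₂ (Set.Icc 0 1))
    (hs1 : ∃ δ : ℝ, 0 < δ ∧ ∀ ρ ∈ Set.Icc (0:ℝ) δ, f₁ ρ = 0)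
    (hs2 : ∃ δ : ℝ, 0 < δ ∧ ∀ ρ ∈ Set.Icc (0:ℝ) δ, f₂ ρ = 0) :
    ∃ u₁ u₂ : ℝ → ℂ,
      ContDiffOn ℝ 3 u₁ (Set.Icc 0 1) ∧
      u₁ 0 = 0 ∧ dI u₁ 0 = 0 ∧ dI (dI u₁) 0 = 0 ∧
      ContDiffOn ℝ 3 u₂ (Set.Icc 0 1) ∧ u₂ 0 = 0 ∧
      ∀ ρ ∈ Set.Ioc (0:ℝ) 1,
        (ρ:ℂ) * dI u₁ ρ - (ρ:ℂ) * dI u₂ ρ + u₂ ρ = f₁ ρ ∧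
        -(dI u₁ ρ / (ρ:ℂ)) + (ρ:ℂ) * dI u₂ ρ + u₂ ρ = f₂ ρ := by
  have hu : UniqueDiffOn ℝ (Set.Icc (0:ℝ) 1) := uniqueDiffOn_Icc zero_lt_one
  have h00 : (0:ℝ) ∈ Set.Icc (0:ℝ) 1 := by simp
  have hf1' : ContDiffOn ℝ (4:ℕ) f₁ (Set.Icc 0 1) := hf1.of_le (WithTop.coe_le_coe.2 le_top)
  have hf2' : ContDiffOn ℝ (4:ℕ) f₂ (Set.Icc 0 1) := hf2.of_le (WithTop.coe_le_coe.2 le_top)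
  obtain ⟨g, hg, hgf⟩ := aux_ext 4 _ ((aux_div 2 4 f₁ hf1' hs1).add hf2')
  obtain ⟨q, hq, hqf⟩ := aux_ext 4 _ (aux_div 1 4 f₁ hf1' hs1)
  obtain ⟨h, hh, hode⟩ := aux_h 3 g hg
  -- values at zero
  have hf10 : f₁ 0 = 0 := by obtain ⟨δ, hδ, H⟩ := hs1; exact H 0 ⟨le_rfl, hδ.le⟩
  have hf20 : f₂ 0 = 0 := by obtain ⟨δ, hδ, H⟩ := hs2; exact H 0 ⟨le_rfl, hδ.le⟩
  have hg0 : g 0 = 0 := by rw [hgf 0 h00]; simp [hf10, hf20]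
  have hq0 : q 0 = 0 := by rw [hqf 0 h00]; simp [hf10]
  have hq'0 : HasDerivWithinAt q 0 (Set.Icc 0 1) 0 := by
    obtain ⟨δ, hδ, H⟩ := hs1
    refine (hasDerivWithinAt_const (c := (0:ℂ)) _ _).congr_of_eventuallyEq ?_ hq0
    filter_upwards [self_mem_nhdsWithin, mem_nhdsWithin_of_mem_nhds (Iio_mem_nhds hδ)] with y hy hy'
    rw [hqf y hy]
    simp [H y ⟨hy.1, le_of_lt hy'⟩]
  have hh0 : deriv h 0 = h 0 := by
    have := hode 0
    rw [hg0] at this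
    simpa [sub_eq_zero] using this
  have hhd : ∀ x, HasDerivAt h (deriv h x) x := fun x =>
    (hh.differentiable (by simp) x).hasDerivAt
  have hh3 : ContDiff ℝ (3:ℕ) h := hh.of_le (by norm_cast)
  have hh' : ContDiff ℝ (3:ℕ) (deriv h) := by
    have := hh
    rw [Nat.cast_add, Nat.cast_one, contDiff_succ_iff_deriv] at this
    exact this.2.2
  have hco : ContDiff ℝ (3:ℕ) (fun ρ : ℝ => (ρ:ℂ)) := Complex.ofRealCLM.contDiff
  have hne : ∀ x ∈ Set.Icc (0:ℝ) 1, (1 + (x:ℂ)) ≠ 0 := by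
    intro x hx
    have : (1 + x) ≠ 0 := by linarith [hx.1]
    exact_mod_cast this
  have hinv : ContDiffOn ℝ (3:ℕ) (fun ρ : ℝ => (1 + (ρ:ℂ))⁻¹) (Set.Icc 0 1) :=
    (contDiff_const.add hco).contDiffOn.inv hne
  -- the function p
  let r : ℝ → ℂ := fun x => deriv h x * (1 + (x:ℂ))⁻¹ - h x * ((1 + (x:ℂ))⁻¹ * (1 + (x:ℂ))⁻¹)
  have hr : ContDiffOn ℝ (3:ℕ) r (Set.Icc 0 1) :=
    (hh'.contDiffOn.mul hinv).sub (hh3.contDiffOn.mul (hinv.mul hinv))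
  let p : ℝ → ℂ := fun x => (x:ℂ) * r x + q x
  have hp : ContDiffOn ℝ (3:ℕ) p (Set.Icc 0 1) :=
    (hco.contDiffOn.mul hr).add (hq.of_le (by norm_cast)).contDiffOn
  obtain ⟨P, hP, hPp⟩ := aux_ext 3 p hp
  have hD : ∀ x, HasDerivAt (fun x => ∫ t in (0:ℝ)..x, P t) (P x) x := fun x =>
    (hP.continuous.integral_hasStrictDerivAt 0 x).hasDerivAt
  have hdu1 : ∀ x ∈ Set.Icc (0:ℝ) 1, dI (fun x => ∫ t in (0:ℝ)..x, P t) x = p x := fun x hx => by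
    rw [dI, (hD x).hasDerivWithinAt.derivWithin (hu x hx), hPp x hx]
  have hdu2 : ∀ x ∈ Set.Icc (0:ℝ) 1, dI (fun x => (x:ℂ) * (h x * (1 + (x:ℂ))⁻¹)) x =
      h x * (1 + (x:ℂ))⁻¹ + x * r x := fun x hx => by
    have hx1 : HasDerivAt (fun x : ℝ => (x:ℂ)) 1 x := by
      simpa using (hasDerivAt_id x).ofReal_comp
    have := (hx1.mul ((hhd x).mul ((hx1.const_add 1).fun_inv (hne x hx))))
    have h2 := this.hasDerivWithinAt.derivWithin (hu x hx)
    refine h2.trans ?_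
    have := hne x hx
    simp only [r, Pi.mul_apply]
    field_simp
    ring
  refine ⟨fun x => ∫ t in (0:ℝ)..x, P t, fun x => (x:ℂ) * (h x * (1 + (x:ℂ))⁻¹),
    ?_, by simp, ?_, ?_, ?_, by simp, ?_⟩
  · have : ContDiff ℝ ((2:ℕ∞) + 1) (fun x => ∫ t in (0:ℝ)..x, P t) := by
      rw [contDiff_succ_iff_deriv]
      refine ⟨fun x => (hD x).differentiableAt, by simp, ?_⟩
      rw [funext fun x => (hD x).deriv]
      exact hP.of_le (by norm_cast)
    exact (this.of_le (by norm_num)).contDiffOn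
  · rw [hdu1 0 h00]; simp [p, hq0]
  · have e : dI (dI fun x => ∫ t in (0:ℝ)..x, P t) 0 = derivWithin p (Set.Icc 0 1) 0 :=
      derivWithin_congr hdu1 (hdu1 0 h00)
    rw [e]
    have hx1 : HasDerivWithinAt (fun x : ℝ => (x:ℂ)) 1 (Set.Icc 0 1) 0 := by
      simpa using ((hasDerivAt_id (0:ℝ)).ofReal_comp).hasDerivWithinAt
    have hr1 := (hr.differentiableOn (by simp) 0 h00).hasDerivWithinAt
    have := ((hx1.mul hr1).add hq'0).derivWithin (hu 0 h00)
    refine this.trans ?_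
    simp [r, hh0]
  · exact_mod_cast hco.contDiffOn.mul (hh3.contDiffOn.mul hinv)
  · intro x hx
    have hx' : x ∈ Set.Icc (0:ℝ) 1 := Set.Ioc_subset_Icc_self hx
    rw [hdu1 x hx', hdu2 x hx']
    have hx0 : (x:ℂ) ≠ 0 := by exact_mod_cast hx.1.ne'
    have h1 := hne x hx'
    have ho := hode x
    rw [hgf x hx'] at ho
    simp only [p, r, hqf x hx']
    constructor
    · field_simp
      ring
    · have ef : f₂ x = h x - (1 - (x:ℂ)) * deriv h x - f₁ x / (x:ℂ)^2 := by
        linear_combination ho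
      rw [ef]
      field_simp
      ring
end

section
/- Let λ ∈ ℂ and let u ∈ C^∞[0,1] be a nontrivial solution of the eigenvalue equation −(1−ρ²)u''(ρ) − (2(1−ρ²)/ρ)u'(ρ) + 2λρu'(ρ) + (V(ρ)/ρ²)u(ρ) + λ(λ+1)u(ρ) = 0 on (0,1), where V(ρ) = 2(1−6ρ²+ρ⁴)/(1+ρ²)². Then either λ = 1 and u(ρ) = c·ρ/(1+ρ²) for some nonzero constant c ∈ ℂ, or the dual eigenvalue equation −(1−ρ²)v''(ρ) − (2(1−ρ²)/ρ)v'(ρ) + 2λρv'(ρ) + (Ṽ(ρ)/ρ²)v(ρ) + λ(λ+1)v(ρ) = 0, with Ṽ(ρ) = (6−2ρ²)/(1+ρ²), has a nontrivial solution v ∈ C^∞[0,1]. -/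
/-- The potential `V(ρ) = 2(1−6ρ²+ρ⁴)/(1+ρ²)²`. -/
noncomputable def Vpot (ρ : ℝ) : ℝ := 2 * (1 - 6 * ρ ^ 2 + ρ ^ 4) / (1 + ρ ^ 2) ^ 2

/-- The dual potential `Ṽ(ρ) = (6−2ρ²)/(1+ρ²)`. -/
noncomputable def Vdual (ρ : ℝ) : ℝ := (6 - 2 * ρ ^ 2) / (1 + ρ ^ 2)

open Set Filter Topology

theorem C1ext (h h' : ℝ → ℂ) (hd : ∀ x ∈ Icc (0:ℝ) 1, HasDerivWithinAt h (h' x) (Icc 0 1) x)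
    (hc : ContinuousOn h' (Icc 0 1)) :
    ∃ H H' : ℝ → ℂ, Continuous H' ∧ (∀ x, HasDerivAt H (H' x) x) ∧
      EqOn H h (Icc 0 1) ∧ EqOn H' h' (Icc 0 1) := by
  let H' : ℝ → ℂ := IccExtend zero_le_one ((Icc (0:ℝ) 1).domRestrict h')
  have hH'c : Continuous H' := (continuousOn_iff_continuous_domRestrict.1 hc).Icc_extend'
  have hH'e : EqOn H' h' (Icc 0 1) := fun x hx => by
    simp [H', IccExtend_of_mem _ _ hx]
  refine ⟨fun x => h 0 + ∫ t in (0:ℝ)..x, H' t, H', hH'c, fun x => ?_, fun x hx => ?_, hH'e⟩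
  · exact (intervalIntegral.integral_hasDerivAt_right (hH'c.intervalIntegrable _ _)
      (hH'c.stronglyMeasurableAtFilter _ _) hH'c.continuousAt).const_add _
  · have : ∫ t in (0:ℝ)..x, H' t = h x - h 0 := by
      apply intervalIntegral.integral_eq_sub_of_hasDeriv_right_of_le hx.1
      · intro y hy
        exact ((hd y ⟨hy.1, hy.2.trans hx.2⟩).continuousWithinAt).mono (Icc_subset_Icc_right hx.2)
      · intro y hy
        have hy' : y ∈ Icc (0:ℝ) 1 := ⟨hy.1.le, hy.2.le.trans hx.2⟩
        rw [hH'e hy']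
        exact ((hd y hy').hasDerivAt (Icc_mem_nhds hy.1 (hy.2.trans_le hx.2))).hasDerivWithinAt
      · exact hH'c.intervalIntegrable _ _
    simp [this]

theorem par_deriv (k : ℕ) (h h' : ℝ → ℂ)
    (hd : ∀ x ∈ Icc (0:ℝ) 1, HasDerivWithinAt h (h' x) (Icc 0 1) x)
    (hc : ContinuousOn h' (Icc 0 1)) :
    ∀ x ∈ Icc (0:ℝ) 1, HasDerivWithinAt (fun x => ∫ t in (0:ℝ)..1, (t:ℂ)^k * h (t*x))
      (∫ t in (0:ℝ)..1, (t:ℂ)^(k+1) * h' (t*x)) (Icc 0 1) x := by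
  obtain ⟨H, H', hH'c, hH, e, e'⟩ := C1ext h h' hd hc
  have hHc : Continuous H := continuous_iff_continuousAt.2 fun x => (hH x).continuousAt
  intro x hx
  have key : ∀ (j : ℕ) (f g : ℝ → ℂ), EqOn f g (Icc 0 1) → ∀ y ∈ Icc (0:ℝ) 1,
      ∫ t in (0:ℝ)..1, (t:ℂ)^j * f (t*y) = ∫ t in (0:ℝ)..1, (t:ℂ)^j * g (t*y) := by
    intro j f g hfg y hy
    apply intervalIntegral.integral_congr
    intro t ht
    rw [uIcc_of_le zero_le_one] at ht
    simp only
    rw [hfg ⟨mul_nonneg ht.1 hy.1, mul_le_one₀ ht.2 hy.1 hy.2⟩]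
  rw [← key _ H' h' e' x hx]
  have main : HasDerivAt (fun x => ∫ t in (0:ℝ)..1, (t:ℂ)^k * H (t*x))
      (∫ t in (0:ℝ)..1, (t:ℂ)^(k+1) * H' (t*x)) x := by
    obtain ⟨C, hC⟩ := (isCompact_Icc (a := (-2:ℝ)) (b := 2)).exists_bound_of_continuousOn
      hH'c.continuousOn
    refine (intervalIntegral.hasDerivAt_integral_of_dominated_loc_of_deriv_le
      (F := fun x t => (t:ℂ)^k * H (t*x)) (F' := fun x t => (t:ℂ)^(k+1) * H' (t*x))
      (s := Icc (-2) 2) (bound := fun _ => C) (Icc_mem_nhds (by linarith [hx.1]) (by linarith [hx.2]))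
      (Eventually.of_forall fun y => ?_) ?_ ?_ ?_ ?_ ?_).2
    · exact (by fun_prop : Continuous fun t : ℝ => (t:ℂ)^k * H (t*y)).aestronglyMeasurable
    · exact (by fun_prop : Continuous fun t : ℝ => (t:ℂ)^k * H (t*x)).intervalIntegrable _ _
    · exact (by fun_prop : Continuous fun t : ℝ => (t:ℂ)^(k+1) * H' (t*x)).aestronglyMeasurable
    · refine Eventually.of_forall fun t ht y hy => ?_
      rw [uIoc_of_le zero_le_one] at ht
      have h1 : ‖H' (t*y)‖ ≤ C := by
        apply hC
        have := ht.1.le; have := ht.2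
        constructor <;> nlinarith [hy.1, hy.2]
      have h2 : ‖(t:ℂ)^(k+1)‖ ≤ 1 := by
        rw [norm_pow, Complex.norm_real, Real.norm_of_nonneg ht.1.le]
        exact pow_le_one₀ ht.1.le ht.2
      rw [norm_mul]
      nlinarith [norm_nonneg (H' (t*y)), norm_nonneg ((t:ℂ)^(k+1))]
    · exact intervalIntegrable_const
    · refine Eventually.of_forall fun t ht y hy => ?_
      have h1 : HasDerivAt (fun y : ℝ => t * y) t y := by
        simpa using (hasDerivAt_id y).const_mul t
      have h2 := ((hH (t*y)).scomp y h1).const_mul ((t:ℂ)^k)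
      refine h2.congr_deriv ?_
      rw [Complex.real_smul]; ring
  refine main.hasDerivWithinAt.congr (fun y hy => (key _ H h e y hy).symm) (key _ H h e x hx).symm

theorem par_smooth (n : ℕ) : ∀ (k : ℕ) (h : ℝ → ℂ), ContDiffOn ℝ (⊤ : ℕ∞) h (Icc 0 1) →
    ContDiffOn ℝ n (fun x => ∫ t in (0:ℝ)..1, (t:ℂ)^k * h (t*x)) (Icc 0 1) := by
  have hU : UniqueDiffOn ℝ (Icc (0:ℝ) 1) := uniqueDiffOn_Icc zero_lt_one
  have D : ∀ (k : ℕ) (h : ℝ → ℂ), ContDiffOn ℝ (⊤ : ℕ∞) h (Icc 0 1) →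
    ∀ x ∈ Icc (0:ℝ) 1, HasDerivWithinAt (fun x => ∫ t in (0:ℝ)..1, (t:ℂ)^k * h (t*x))
      (∫ t in (0:ℝ)..1, (t:ℂ)^(k+1) * (derivWithin h (Icc 0 1)) (t*x)) (Icc 0 1) x := by
    intro k h hh
    have := (contDiffOn_infty_iff_derivWithin hU).1 hh
    exact par_deriv k h _ (fun x hx => (this.1 x hx).hasDerivWithinAt) this.2.continuousOn
  induction n with
  | zero =>
    intro k h hh
    exact contDiffOn_zero.2 fun x hx => (D k h hh x hx).continuousWithinAt
  | succ n ih =>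
    intro k h hh
    push_cast
    rw [contDiffOn_succ_iff_derivWithin hU]
    refine ⟨fun x hx => (D k h hh x hx).differentiableWithinAt, by simp, ?_⟩
    refine (ih (k+1) _ ((contDiffOn_infty_iff_derivWithin hU).1 hh).2).congr fun x hx => ?_
    exact (D k h hh x hx).derivWithin (hU x hx)

theorem hadamard (u : ℝ → ℂ) (hu : ContDiffOn ℝ (⊤ : ℕ∞) u (Icc 0 1)) (h0 : u 0 = 0) :
    ∃ q : ℝ → ℂ, ContDiffOn ℝ (⊤ : ℕ∞) q (Icc 0 1) ∧ ∀ x ∈ Icc (0:ℝ) 1, u x = x * q x := by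
  have hU : UniqueDiffOn ℝ (Icc (0:ℝ) 1) := uniqueDiffOn_Icc zero_lt_one
  have hu' := (contDiffOn_infty_iff_derivWithin hU).1 hu
  obtain ⟨H, H', hH'c, hH, e, e'⟩ := C1ext u _
    (fun x hx => (hu'.1 x hx).hasDerivWithinAt) hu'.2.continuousOn
  refine ⟨fun x => ∫ t in (0:ℝ)..1, (t:ℂ)^0 * (derivWithin u (Icc 0 1)) (t*x),
    contDiffOn_infty.2 fun n => par_smooth n 0 _ hu'.2, fun x hx => ?_⟩
  have h1 : ∫ t in (0:ℝ)..1, (t:ℂ)^0 * (derivWithin u (Icc 0 1)) (t*x)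
      = ∫ t in (0:ℝ)..1, H' (t*x) := by
    apply intervalIntegral.integral_congr
    intro t ht
    rw [uIcc_of_le zero_le_one] at ht
    simp only [pow_zero, one_mul]
    rw [e' ⟨mul_nonneg ht.1 hx.1, mul_le_one₀ ht.2 hx.1 hx.2⟩]
  have h2 : ∫ t in (0:ℝ)..1, (x:ℂ) * H' (t*x) = H (1*x) - H (0*x) := by
    apply intervalIntegral.integral_eq_sub_of_hasDerivAt (f := fun t => H (t*x))
    · intro t _
      have := (hH (t*x)).scomp t ((hasDerivAt_id t).mul_const x)
      refine this.congr_deriv ?_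
      simp
    · exact (by fun_prop : Continuous fun t : ℝ => (x:ℂ) * H' (t*x)).intervalIntegrable _ _
  simp only [h1]
  rw [← intervalIntegral.integral_const_mul, h2, one_mul, zero_mul, e hx, e (by simp), h0, sub_zero]

theorem Vpot_c (ρ : ℝ) (hρ : ρ ≠ 0) : ((Vpot ρ : ℝ) : ℂ) / (ρ:ℂ)^2
    = 2 / (ρ:ℂ)^2 - 16 / (1 + (ρ:ℂ)^2)^2 := by
  have h1 : (ρ:ℂ) ≠ 0 := by exact_mod_cast hρ
  have h2 : (1 + (ρ:ℂ)^2) ≠ 0 := by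
    have : (1 + ρ^2) ≠ 0 := by positivity
    exact_mod_cast this
  simp only [Vpot]
  push_cast
  field_simp
  ring

theorem Vdual_c (ρ : ℝ) : ((Vdual ρ : ℝ) : ℂ)
    = (6 - 2 * (ρ:ℂ)^2) / (1 + (ρ:ℂ)^2) := by
  simp only [Vdual]
  push_cast
  rfl

theorem alg1 (r l a b c : ℂ) (hr : r ≠ 0) (hs : 1 + r^2 ≠ 0)
    (hc : (1 - r^2) * c = (-2*(1-r^2)/r + 2*l*r)*b + (2/r^2 - 16/(1+r^2)^2 + l*(l+1))*a) :
    -(1-r^2) * ((l+3/r^2+4*(1-r^2)/(1+r^2)^2) * b + (l*r-3/r+4*r/(1+r^2)) * c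
        + ((-6/r^3+(40*r+8*r^3)/(1+r^2)^3) * a + (3/r^2+l^2-(12+4*r^2)/(1+r^2)^2) * b))
      - (2*(1-r^2)/r) * ((l*r-3/r+4*r/(1+r^2)) * b + (3/r^2+l^2-(12+4*r^2)/(1+r^2)^2) * a)
      + 2*l*r * ((l*r-3/r+4*r/(1+r^2)) * b + (3/r^2+l^2-(12+4*r^2)/(1+r^2)^2) * a)
      + ((6 - 2 * r^2) / (1 + r^2) / r^2) * ((1-r^2)*b + (-l*r-1/r+4*r/(1+r^2))*a)
      + l*(l+1) * ((1-r^2)*b + (-l*r-1/r+4*r/(1+r^2))*a) = 0 := by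
  have e : ∀ X Y P : ℂ, -(1-r^2)*(X + P*c + Y) = -(1-r^2)*(X+Y) - P*((1-r^2)*c) := by
    intros; ring
  rw [e, hc]
  field_simp
  ring

theorem alg2 (r l a b : ℂ) (hr : r ≠ 0) (hs : 1 + r^2 ≠ 0)
    (h0 : (1-r^2)*b + (-l*r-1/r+4*r/(1+r^2))*a = 0)
    (h1 : (l*r-3/r+4*r/(1+r^2)) * b + (3/r^2+l^2-(12+4*r^2)/(1+r^2)^2) * a = 0) :
    (l-1)^2 * a = 0 := by
  have : (l-1)^2 * a = (1-r^2) * ((l*r-3/r+4*r/(1+r^2)) * b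
      + (3/r^2+l^2-(12+4*r^2)/(1+r^2)^2) * a)
      - (l*r-3/r+4*r/(1+r^2)) * ((1-r^2)*b + (-l*r-1/r+4*r/(1+r^2))*a) := by
    field_simp
    ring
  rw [this, h0, h1]; ring

theorem s_ne (ρ : ℝ) : (1 + (ρ:ℂ)^2) ≠ 0 := by
  have : (1 + ρ^2) ≠ 0 := by positivity
  exact_mod_cast this

theorem dg (l : ℂ) (ρ : ℝ) (hρ : ρ ≠ 0) :
    HasDerivAt (fun x : ℝ => (-l*(x:ℂ)-1/(x:ℂ)+4*(x:ℂ)/(1+(x:ℂ)^2)))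
      (-l+1/(ρ:ℂ)^2+4*(1-(ρ:ℂ)^2)/(1+(ρ:ℂ)^2)^2) ρ := by
  have hr : (ρ:ℂ) ≠ 0 := by exact_mod_cast hρ
  have hs := s_ne ρ
  have i : HasDerivAt (fun z : ℂ => z) 1 (ρ:ℂ) := hasDerivAt_id _
  have := (((i.const_mul (-l)).sub ((hasDerivAt_const (ρ:ℂ) (1:ℂ)).div i hr)).add
    ((i.const_mul 4).div ((i.pow 2).const_add 1) hs)).comp_ofReal
  refine this.congr_deriv ?_
  simp only [Pi.pow_apply]
  field_simp
  ring

theorem dP (l : ℂ) (ρ : ℝ) (hρ : ρ ≠ 0) :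
    HasDerivAt (fun x : ℝ => (l*(x:ℂ)-3/(x:ℂ)+4*(x:ℂ)/(1+(x:ℂ)^2)))
      (l+3/(ρ:ℂ)^2+4*(1-(ρ:ℂ)^2)/(1+(ρ:ℂ)^2)^2) ρ := by
  have hr : (ρ:ℂ) ≠ 0 := by exact_mod_cast hρ
  have hs := s_ne ρ
  have i : HasDerivAt (fun z : ℂ => z) 1 (ρ:ℂ) := hasDerivAt_id _
  have := (((i.const_mul l).sub ((hasDerivAt_const (ρ:ℂ) (3:ℂ)).div i hr)).add
    ((i.const_mul 4).div ((i.pow 2).const_add 1) hs)).comp_ofReal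
  refine this.congr_deriv ?_
  simp only [Pi.pow_apply]
  field_simp
  ring

theorem dQ (l : ℂ) (ρ : ℝ) (hρ : ρ ≠ 0) :
    HasDerivAt (fun x : ℝ => (3/(x:ℂ)^2+l^2-(12+4*(x:ℂ)^2)/(1+(x:ℂ)^2)^2))
      (-6/(ρ:ℂ)^3+(40*(ρ:ℂ)+8*(ρ:ℂ)^3)/(1+(ρ:ℂ)^2)^3) ρ := by
  have hr : (ρ:ℂ) ≠ 0 := by exact_mod_cast hρ
  have hs := s_ne ρ
  have i : HasDerivAt (fun z : ℂ => z) 1 (ρ:ℂ) := hasDerivAt_id _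
  have := ((((hasDerivAt_const (ρ:ℂ) (3:ℂ)).div (i.pow 2) (pow_ne_zero 2 hr)).add_const (l^2)).sub
    ((((i.pow 2).const_mul 4).const_add 12).div (((i.pow 2).const_add 1).pow 2)
      (pow_ne_zero 2 hs))).comp_ofReal
  refine this.congr_deriv ?_
  simp only [Pi.pow_apply]
  field_simp
  ring

/-- the dual eigenvalue problem: if `u ∈ C^∞[0,1]` is a nontrivial solution
of the eigenvalue equation with potential `V`, then either `λ = 1` and `u` is a multiple of
the gauge mode `ρ/(1+ρ²)`, or the dual eigenvalue equation with potential `Ṽ` has a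
nontrivial solution `v ∈ C^∞[0,1]`. -/
theorem stmt_11 (lam : ℂ) (u : ℝ → ℂ)
    (hu : ContDiffOn ℝ (⊤ : ℕ∞) u (Set.Icc 0 1))
    (hnontriv : ∃ ρ ∈ Set.Icc (0:ℝ) 1, u ρ ≠ 0)
    (hode : ∀ ρ ∈ Set.Ioo (0:ℝ) 1,
      -(1 - (ρ:ℂ) ^ 2) * deriv (deriv u) ρ
      - (2 * (1 - (ρ:ℂ) ^ 2) / (ρ:ℂ)) * deriv u ρ
      + 2 * lam * (ρ:ℂ) * deriv u ρ
      + (((Vpot ρ : ℝ) : ℂ) / (ρ:ℂ) ^ 2) * u ρ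
      + lam * (lam + 1) * u ρ = 0) :
    (lam = 1 ∧ ∃ c : ℂ, c ≠ 0 ∧ ∀ ρ ∈ Set.Icc (0:ℝ) 1,
      u ρ = c * ((ρ / (1 + ρ ^ 2) : ℝ) : ℂ)) ∨
    (∃ v : ℝ → ℂ, ContDiffOn ℝ (⊤ : ℕ∞) v (Set.Icc 0 1) ∧
      (∃ ρ ∈ Set.Icc (0:ℝ) 1, v ρ ≠ 0) ∧
      ∀ ρ ∈ Set.Ioo (0:ℝ) 1,
        -(1 - (ρ:ℂ) ^ 2) * deriv (deriv v) ρ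
        - (2 * (1 - (ρ:ℂ) ^ 2) / (ρ:ℂ)) * deriv v ρ
        + 2 * lam * (ρ:ℂ) * deriv v ρ
        + (((Vdual ρ : ℝ) : ℂ) / (ρ:ℂ) ^ 2) * v ρ
        + lam * (lam + 1) * v ρ = 0) := by
  have hU : UniqueDiffOn ℝ (Icc (0:ℝ) 1) := uniqueDiffOn_Icc zero_lt_one
  have hnear : ∀ x ∈ Ioo (0:ℝ) 1, Icc (0:ℝ) 1 ∈ 𝓝 x := fun x hx => Icc_mem_nhds hx.1 hx.2
  have hopen : ∀ x ∈ Ioo (0:ℝ) 1, ∀ᶠ y in 𝓝 x, y ∈ Ioo (0:ℝ) 1 := fun x hx =>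
    isOpen_Ioo.mem_nhds hx
  have hcl : Icc (0:ℝ) 1 ⊆ closure (Ioo 0 1) := by rw [closure_Ioo zero_ne_one]
  have hu1 := (contDiffOn_infty_iff_derivWithin hU).1 hu
  have hu2 := (contDiffOn_infty_iff_derivWithin hU).1 hu1.2
  set u1 := derivWithin u (Icc 0 1) with hu1def
  set u2 := derivWithin u1 (Icc 0 1) with hu2def
  have d1 : ∀ x ∈ Ioo (0:ℝ) 1, HasDerivAt u (u1 x) x := fun x hx =>
    ((hu1.1 x (Ioo_subset_Icc_self hx)).hasDerivWithinAt).hasDerivAt (hnear x hx)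
  have d2 : ∀ x ∈ Ioo (0:ℝ) 1, HasDerivAt u1 (u2 x) x := fun x hx =>
    ((hu2.1 x (Ioo_subset_Icc_self hx)).hasDerivWithinAt).hasDerivAt (hnear x hx)
  have e1 : ∀ x ∈ Ioo (0:ℝ) 1, deriv u x = u1 x := fun x hx => (d1 x hx).deriv
  have e2 : ∀ x ∈ Ioo (0:ℝ) 1, deriv (deriv u) x = u2 x := fun x hx => by
    rw [← (d2 x hx).deriv]
    apply EventuallyEq.deriv_eq
    filter_upwards [hopen x hx] with y hy using e1 y hy
  -- the equation solved for `(1 - ρ²) u''`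
  have ode : ∀ x ∈ Ioo (0:ℝ) 1, (1 - (x:ℂ)^2) * u2 x
      = (-2*(1-(x:ℂ)^2)/(x:ℂ) + 2*lam*(x:ℂ))*u1 x
        + (2/(x:ℂ)^2 - 16/(1+(x:ℂ)^2)^2 + lam*(lam+1))*u x := by
    intro x hx
    have := hode x hx
    rw [e1 x hx, e2 x hx, Vpot_c x hx.1.ne'] at this
    linear_combination -this
  have hcR : ContinuousOn (fun x : ℝ => (x:ℂ)) (Icc 0 1) := Complex.continuous_ofReal.continuousOn
  -- `u 0 = 0`
  have hu0 : u 0 = 0 := by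
    have cu := hu.continuousOn
    have cu1 := hu1.2.continuousOn
    have cu2 := hu2.2.continuousOn
    have hinv : ContinuousOn (fun x : ℝ => 16*(x:ℂ)^2/(1+(x:ℂ)^2)^2) (Icc 0 1) :=
      ContinuousOn.div (by fun_prop) (by fun_prop) (fun x _ => pow_ne_zero 2 (s_ne x))
    have E : EqOn (fun x : ℝ => (x:ℂ)^2 * ((1 - (x:ℂ)^2) * u2 x))
        (fun x : ℝ => (-2*(x:ℂ)*(1-(x:ℂ)^2) + 2*lam*(x:ℂ)^3)*u1 x
        + (2 - 16*(x:ℂ)^2/(1+(x:ℂ)^2)^2 + lam*(lam+1)*(x:ℂ)^2)*u x) (Ioo 0 1) := by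
      intro x hx
      have hr : (x:ℂ) ≠ 0 := by exact_mod_cast hx.1.ne'
      have hs := s_ne x
      simp only
      rw [ode x hx]
      field_simp
    have E' := E.of_subset_closure (by fun_prop) (by fun_prop) Ioo_subset_Icc_self hcl
    have := E' (show (0:ℝ) ∈ Icc (0:ℝ) 1 by simp)
    simpa using this
  obtain ⟨q, hq, huq⟩ := hadamard u hu hu0
  let v : ℝ → ℂ := fun x => (1 - (x:ℂ)^2) * u1 x + (-lam*(x:ℂ)+4*(x:ℂ)/(1+(x:ℂ)^2)) * u x - q x
  have hvdef : ∀ x ∈ Ioo (0:ℝ) 1,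
      v x = (1-(x:ℂ)^2)*u1 x + (-lam*(x:ℂ)-1/(x:ℂ)+4*(x:ℂ)/(1+(x:ℂ)^2))*u x := by
    intro x hx
    have hr : (x:ℂ) ≠ 0 := by exact_mod_cast hx.1.ne'
    have : q x = 1/(x:ℂ) * u x := by rw [huq x (Ioo_subset_Icc_self hx)]; field_simp
    simp only [v, this]; ring
  have hxs : ContDiff ℝ (⊤ : ℕ∞) (fun x : ℝ => (x:ℂ)) := Complex.ofRealCLM.contDiff
  have hvs : ContDiffOn ℝ (⊤ : ℕ∞) v (Icc 0 1) := by
    have hx' := hxs.contDiffOn (s := Icc (0:ℝ) 1)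
    have hd : ContDiffOn ℝ (⊤ : ℕ∞) (fun x : ℝ => 4*(x:ℂ)/(1+(x:ℂ)^2)) (Icc 0 1) :=
      (contDiffOn_const.mul hx').mul
        ((contDiffOn_const.add (hx'.pow 2)).inv (fun x _ => s_ne x))
    exact (((contDiffOn_const.sub (hx'.pow 2)).mul hu1.2).add
      (((contDiffOn_const.mul hx').add hd).mul hu)).sub hq
  have dv : ∀ x ∈ Ioo (0:ℝ) 1, HasDerivAt v
      ((lam*(x:ℂ)-3/(x:ℂ)+4*(x:ℂ)/(1+(x:ℂ)^2)) * u1 x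
        + (3/(x:ℂ)^2+lam^2-(12+4*(x:ℂ)^2)/(1+(x:ℂ)^2)^2) * u x) x := by
    intro x hx
    have hr : (x:ℂ) ≠ 0 := by exact_mod_cast hx.1.ne'
    have hs := s_ne x
    have i : HasDerivAt (fun y : ℝ => 1 - (y:ℂ)^2) (-(2*(x:ℂ))) x := by
      have i : HasDerivAt (fun z : ℂ => z) 1 (x:ℂ) := hasDerivAt_id _
      refine ((i.pow 2).const_sub 1).comp_ofReal.congr_deriv ?_
      simp
    have := (i.mul (d2 x hx)).add ((dg lam x hx.1.ne').mul (d1 x hx))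
    refine (this.congr_of_eventuallyEq ?_).congr_deriv ?_
    · filter_upwards [hopen x hx] with y hy using hvdef y hy
    · rw [ode x hx]
      field_simp
      ring
  have dv2 : ∀ x ∈ Ioo (0:ℝ) 1, HasDerivAt (deriv v)
      ((lam+3/(x:ℂ)^2+4*(1-(x:ℂ)^2)/(1+(x:ℂ)^2)^2) * u1 x
        + (lam*(x:ℂ)-3/(x:ℂ)+4*(x:ℂ)/(1+(x:ℂ)^2)) * u2 x
        + ((-6/(x:ℂ)^3+(40*(x:ℂ)+8*(x:ℂ)^3)/(1+(x:ℂ)^2)^3) * u x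
        + (3/(x:ℂ)^2+lam^2-(12+4*(x:ℂ)^2)/(1+(x:ℂ)^2)^2) * u1 x)) x := by
    intro x hx
    have := ((dP lam x hx.1.ne').mul (d2 x hx)).add ((dQ lam x hx.1.ne').mul (d1 x hx))
    refine this.congr_of_eventuallyEq ?_
    filter_upwards [hopen x hx] with y hy using (dv y hy).deriv
  by_cases hv0 : ∃ ρ ∈ Icc (0:ℝ) 1, v ρ ≠ 0
  · right
    refine ⟨v, hvs, hv0, fun x hx => ?_⟩
    have hr : (x:ℂ) ≠ 0 := by exact_mod_cast hx.1.ne'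
    rw [(dv2 x hx).deriv, (dv x hx).deriv, hvdef x hx, Vdual_c]
    exact alg1 (x:ℂ) lam (u x) (u1 x) (u2 x) hr (s_ne x) (ode x hx)
  · left
    push Not at hv0
    have hv' : ∀ x ∈ Ioo (0:ℝ) 1, deriv v x = 0 := by
      intro x hx
      have : v =ᶠ[𝓝 x] fun _ => (0:ℂ) := by
        filter_upwards [hnear x hx] with y hy using hv0 y hy
      rw [this.deriv_eq]; simp
    have hl : lam = 1 := by
      by_contra hne
      have hz : EqOn u (fun _ => 0) (Ioo 0 1) := by
        intro x hx
        have hr : (x:ℂ) ≠ 0 := by exact_mod_cast hx.1.ne'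
        have a0 := hvdef x hx
        rw [hv0 x (Ioo_subset_Icc_self hx)] at a0
        have a1 := (dv x hx).deriv
        rw [hv' x hx] at a1
        have := alg2 _ lam _ _ hr (s_ne x) a0.symm a1.symm
        exact (mul_eq_zero.1 this).resolve_left (pow_ne_zero 2 (sub_ne_zero.2 hne))
      have hz' := hz.of_subset_closure hu.continuousOn continuousOn_const Ioo_subset_Icc_self hcl
      obtain ⟨ρ, hρ, h⟩ := hnontriv
      exact h (hz' hρ)
    subst hl
    refine ⟨rfl, ?_⟩
    have hconst : ∃ c : ℂ, ∀ x ∈ Ioo (0:ℝ) 1, u x * ((1 + (x:ℂ)^2) / (x:ℂ)) = c := by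
      have D : ∀ x ∈ Ioo (0:ℝ) 1,
          HasDerivAt (fun x : ℝ => u x * ((1 + (x:ℂ)^2) / (x:ℂ))) 0 x := by
        intro x hx
        have hr : (x:ℂ) ≠ 0 := by exact_mod_cast hx.1.ne'
        have hs := s_ne x
        have hm : 1 - (x:ℂ)^2 ≠ 0 := by
          have : 1 - x^2 ≠ 0 := by nlinarith [hx.1, hx.2]
          exact_mod_cast this
        have i : HasDerivAt (fun z : ℂ => z) 1 (x:ℂ) := hasDerivAt_id _
        have j := (((i.pow 2).const_add 1).div i hr).comp_ofReal
        refine ((d1 x hx).mul j).congr_deriv ?_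
        have a0 := hvdef x hx
        rw [hv0 x (Ioo_subset_Icc_self hx)] at a0
        have hb : u1 x = (1-(x:ℂ)^2) / ((x:ℂ) * (1+(x:ℂ)^2)) * u x := by
          apply mul_left_cancel₀ hm
          have : (1-(x:ℂ)^2) * u1 x = -(-1*(x:ℂ)-1/(x:ℂ)+4*(x:ℂ)/(1+(x:ℂ)^2))*u x := by
            linear_combination -a0
          rw [this]
          field_simp
          ring
        rw [hb]
        simp only [Pi.pow_apply, Pi.div_apply]
        field_simp
        ring
      refine ⟨u (1/2) * ((1 + ((1/2:ℝ):ℂ)^2) / ((1/2:ℝ):ℂ)), fun x hx => ?_⟩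
      exact isOpen_Ioo.is_const_of_deriv_eq_zero isPreconnected_Ioo
        (fun y hy => (D y hy).differentiableAt.differentiableWithinAt)
        (fun y hy => (D y hy).deriv) hx (by constructor <;> norm_num)
    obtain ⟨c, hc⟩ := hconst
    have hE : EqOn u (fun x : ℝ => c * ((x / (1 + x^2) : ℝ) : ℂ)) (Ioo 0 1) := by
      intro x hx
      have hr : (x:ℂ) ≠ 0 := by exact_mod_cast hx.1.ne'
      have hs := s_ne x
      simp only
      rw [← hc x hx]
      push_cast
      field_simp
    have hcc : Continuous (fun x : ℝ => c * ((x / (1 + x^2) : ℝ) : ℂ)) := by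
      have : Continuous (fun x : ℝ => x / (1 + x^2)) :=
        continuous_id.div (by fun_prop) (fun x => by positivity)
      fun_prop
    have hE' := hE.of_subset_closure hu.continuousOn hcc.continuousOn Ioo_subset_Icc_self hcl
    refine ⟨c, ?_, fun ρ hρ => hE' hρ⟩
    rintro rfl
    obtain ⟨ρ, hρ, h⟩ := hnontriv
    exact h (by rw [hE' hρ]; simp)
end

section
/- Let λ ∈ ℂ with Re λ ≥ 1/2 and let u ∈ C^∞[0,1] be a nontrivial solution of −(1−ρ²)u''(ρ) − (2(1−ρ²)/ρ)u'(ρ) + 2λρu'(ρ) + (V(ρ)/ρ²)u(ρ) + λ(λ+1)u(ρ) = 0 on (0,1), where V(ρ) = 2(1−6ρ²+ρ⁴)/(1+ρ²)². Then λ = 1 and there exists a nonzero constant c ∈ ℂ such that u(ρ) = c·ρ/(1+ρ²) for all ρ ∈ [0,1]. -/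
/-- The energy flux functional, written with real and imaginary parts; `a + i b = lam`,
`x + i y = v`, `p + i q` is the radial derivative of `v` times the radius. -/
noncomputable def Gfun (a b r W x y p q : ℝ) : ℝ :=
  r * (((a * x - b * y + p) * p + (a * y + b * x + q) * q)
    - (r ^ 2 * ((a * x - b * y + p) ^ 2 + (a * y + b * x + q) ^ 2) + (p ^ 2 + q ^ 2)
      + W * (x ^ 2 + y ^ 2)) / 2)

theorem G_deriv (a b r : ℝ) (x y x1 y1 W : ℝ → ℝ) (x2 y2 W1 : ℝ)
    (hx : HasDerivAt x (x1 r) r) (hy : HasDerivAt y (y1 r) r)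
    (hx1 : HasDerivAt x1 x2 r) (hy1 : HasDerivAt y1 y2 r) (hW : HasDerivAt W W1 r)
    (odex : -(1 - r ^ 2) * r ^ 2 * x2 - 2 * (1 - r ^ 2) * r * x1 r
      + 2 * r ^ 3 * (a * x1 r - b * y1 r) + W r * x r
      + r ^ 2 * ((a * (a + 1) - b ^ 2) * x r - (2 * a + 1) * b * y r) = 0)
    (odey : -(1 - r ^ 2) * r ^ 2 * y2 - 2 * (1 - r ^ 2) * r * y1 r
      + 2 * r ^ 3 * (a * y1 r + b * x1 r) + W r * y r
      + r ^ 2 * ((a * (a + 1) - b ^ 2) * y r + (2 * a + 1) * b * x r) = 0) :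
    HasDerivAt (fun s => Gfun a b s (W s) (x s) (y s) (s * x1 s) (s * y1 s))
      ((2 * a - 1) * (r ^ 2 * ((a * x r - b * y r + r * x1 r) ^ 2
          + (a * y r + b * x r + r * y1 r) ^ 2 + x1 r ^ 2 + y1 r ^ 2)
          + W r * (x r ^ 2 + y r ^ 2)) / 2
        - r * W1 / 2 * (x r ^ 2 + y r ^ 2)) r := by
  have hid := hasDerivAt_id r
  have hp := hid.mul hx1
  have hq := hid.mul hy1
  have hA := ((hx.const_mul a).sub (hy.const_mul b)).add hp
  have hB := ((hy.const_mul a).add (hx.const_mul b)).add hq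
  have h := hid.mul (((hA.mul hp).add (hB.mul hq)).sub
    (((((hid.pow 2).mul ((hA.pow 2).add (hB.pow 2))).add ((hp.pow 2).add (hq.pow 2))).add
      (hW.mul ((hx.pow 2).add (hy.pow 2)))).div_const 2))
  refine HasDerivAt.congr_deriv (f' := _) (h.congr_of_eventuallyEq ?_) ?_
  · exact Filter.Eventually.of_forall fun s => by simp [Gfun]
  · simp only [Pi.mul_apply, Pi.add_apply, Pi.sub_apply, Pi.pow_apply, id]
    push_cast
    linear_combination (-(a * x r - b * y r + r * x1 r)) * odex
      - (a * y r + b * x r + r * y1 r) * odey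

theorem energy (lam : ℂ) (hlam : (1:ℝ)/2 ≤ lam.re) (v v1 v2 p : ℝ → ℂ)
    (hv : ∀ r ∈ Set.Ioo (0:ℝ) 1, HasDerivAt v (v1 r) r)
    (hv1 : ∀ r ∈ Set.Ioo (0:ℝ) 1, HasDerivAt v1 (v2 r) r)
    (hvc : ContinuousOn v (Set.Icc 0 1)) (hpc : ContinuousOn p (Set.Icc 0 1))
    (hp : ∀ r ∈ Set.Ioo (0:ℝ) 1, p r = r * v1 r)
    (ode : ∀ r ∈ Set.Ioo (0:ℝ) 1, -(1 - (r:ℂ) ^ 2) * r ^ 2 * v2 r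
      - 2 * (1 - (r:ℂ) ^ 2) * r * v1 r + 2 * r ^ 3 * lam * v1 r
      + ((2 * (3 - r ^ 2) / (1 + r ^ 2) : ℝ) : ℂ) * v r + r ^ 2 * (lam * (lam + 1)) * v r = 0) :
    ∀ r ∈ Set.Ioo (0:ℝ) 1, v r = 0 := by
  set W : ℝ → ℝ := fun r => 2 * (3 - r ^ 2) / (1 + r ^ 2) with hWdef
  have hpos : ∀ r : ℝ, 1 + r ^ 2 ≠ 0 := fun r => by positivity
  have hWc : Continuous W := by
    apply Continuous.div (by fun_prop) (by fun_prop) hpos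
  have hW : ∀ r, HasDerivAt W (-16 * r / (1 + r ^ 2) ^ 2) r := by
    intro r
    have hid := hasDerivAt_id r
    have h := ((((hid.pow 2).const_sub 3).const_mul 2).div ((hid.pow 2).const_add 1) (hpos r))
    refine h.congr_deriv ?_
    simp only [Pi.pow_apply, id]
    push_cast
    congr 1
    ring
  set G : ℝ → ℝ := fun r => Gfun lam.re lam.im r (W r) (v r).re (v r).im (p r).re (p r).im with hG
  have hGc : ContinuousOn G (Set.Icc 0 1) := by
    have h1 : ContinuousOn (fun r => (v r).re) (Set.Icc 0 1) := Complex.continuous_re.comp_continuousOn hvc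
    have h2 : ContinuousOn (fun r => (v r).im) (Set.Icc 0 1) := Complex.continuous_im.comp_continuousOn hvc
    have h3 : ContinuousOn (fun r => (p r).re) (Set.Icc 0 1) := Complex.continuous_re.comp_continuousOn hpc
    have h4 : ContinuousOn (fun r => (p r).im) (Set.Icc 0 1) := Complex.continuous_im.comp_continuousOn hpc
    have h5 := hWc.continuousOn (s := Set.Icc 0 1)
    simp only [hG, Gfun]
    fun_prop
  have hGd : ∀ r ∈ Set.Ioo (0:ℝ) 1, ∃ d, HasDerivAt G d r ∧
      8 * r ^ 2 / (1 + r ^ 2) ^ 2 * ((v r).re ^ 2 + (v r).im ^ 2) ≤ d := by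
    intro r hr
    have e := ode r hr
    have re' : ∀ (f : ℝ → ℂ) (f' : ℂ), HasDerivAt f f' r → HasDerivAt (fun s => (f s).re) f'.re r :=
      fun f f' h => (Complex.reCLM.hasFDerivAt.comp_hasDerivAt r h)
    have im' : ∀ (f : ℝ → ℂ) (f' : ℂ), HasDerivAt f f' r → HasDerivAt (fun s => (f s).im) f'.im r :=
      fun f f' h => (Complex.imCLM.hasFDerivAt.comp_hasDerivAt r h)
    have e1 : ((1 - r ^ 2 : ℝ) : ℂ) = 1 - (r:ℂ) ^ 2 := by push_cast; ring
    have e' : (( -(1 - r ^ 2) * r ^ 2 : ℝ) : ℂ) * v2 r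
      - ((2 * (1 - r ^ 2) * r : ℝ) : ℂ) * v1 r + ((2 * r ^ 3 : ℝ) : ℂ) * (lam * v1 r)
      + ((W r : ℝ) : ℂ) * v r + ((r ^ 2 : ℝ) : ℂ) * ((lam * (lam + 1)) * v r) = 0 := by
      rw [← e]; simp only [hWdef]; push_cast; ring
    have er := congrArg Complex.re e'
    have ei := congrArg Complex.im e'
    simp only [Complex.add_re, Complex.sub_re, Complex.ofReal_re, Complex.zero_re,
      Complex.add_im, Complex.sub_im, Complex.ofReal_im, Complex.zero_im, Complex.mul_re,
      Complex.mul_im, Complex.one_re, Complex.one_im, add_zero] at er ei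
    have key := G_deriv lam.re lam.im r _ _ (fun s => (v1 s).re) (fun s => (v1 s).im) W _ _ _
      (re' v _ (hv r hr)) (im' v _ (hv r hr)) (re' v1 _ (hv1 r hr)) (im' v1 _ (hv1 r hr)) (hW r)
      (by simp only [hWdef] at er ⊢; linear_combination er) (by simp only [hWdef] at ei ⊢; linear_combination ei)
    refine ⟨_, key.congr_of_eventuallyEq ?_, ?_⟩
    · filter_upwards [Ioo_mem_nhds hr.1 hr.2] with s hs
      simp only [hG, hp s hs, Complex.re_ofReal_mul, Complex.im_ofReal_mul]
    · have hWp : 0 ≤ W r := by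
        apply div_nonneg _ (by positivity)
        nlinarith [hr.1, hr.2]
      have ha : 0 ≤ 2 * lam.re - 1 := by linarith
      have : 0 ≤ (2 * lam.re - 1) * (r ^ 2 * ((lam.re * (v r).re - lam.im * (v r).im + r * (v1 r).re) ^ 2
          + (lam.re * (v r).im + lam.im * (v r).re + r * (v1 r).im) ^ 2 + (v1 r).re ^ 2 + (v1 r).im ^ 2)
          + W r * ((v r).re ^ 2 + (v r).im ^ 2)) / 2 := by positivity
      have h2 : 8 * r ^ 2 / (1 + r ^ 2) ^ 2 * ((v r).re ^ 2 + (v r).im ^ 2)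
        = - (r * (-16 * r / (1 + r ^ 2) ^ 2) / 2 * ((v r).re ^ 2 + (v r).im ^ 2)) := by ring
      linarith
  have hmono : MonotoneOn G (Set.Icc 0 1) := by
    apply monotoneOn_of_deriv_nonneg (convex_Icc 0 1) hGc
    · rw [interior_Icc]
      intro r hr
      obtain ⟨d, hd, -⟩ := hGd r hr
      exact hd.differentiableAt.differentiableWithinAt
    · rw [interior_Icc]
      intro r hr
      obtain ⟨d, hd, h⟩ := hGd r hr
      rw [hd.deriv]
      exact le_trans (by positivity) h
  have hG0 : G 0 = 0 := by simp [hG, Gfun]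
  have hG1 : G 1 ≤ 0 := by
    simp only [hG, Gfun, hWdef]
    generalize (v 1).re = x
    generalize (v 1).im = y
    generalize (p 1).re = P
    generalize (p 1).im = Q
    generalize lam.re * x - lam.im * y + P = A
    generalize lam.re * y + lam.im * x + Q = B
    norm_num
    nlinarith [sq_nonneg (A - P), sq_nonneg (B - Q), sq_nonneg x, sq_nonneg y]
  have hGz : ∀ r ∈ Set.Icc (0:ℝ) 1, G r = 0 := by
    intro r hr
    have h1 := hmono (Set.left_mem_Icc.2 zero_le_one) hr hr.1
    have h2 := hmono hr (Set.right_mem_Icc.2 zero_le_one) hr.2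
    linarith
  intro r hr
  obtain ⟨d, hd, h⟩ := hGd r hr
  have h0 : HasDerivAt G 0 r := by
    refine (hasDerivAt_const r (0:ℝ)).congr_of_eventuallyEq ?_
    filter_upwards [Ioo_mem_nhds hr.1 hr.2] with s hs
    exact hGz s ⟨hs.1.le, hs.2.le⟩
  rw [hd.unique h0] at h
  have hc : 0 < 8 * r ^ 2 / (1 + r ^ 2) ^ 2 := by have := hr.1; positivity
  have hz : (v r).re ^ 2 + (v r).im ^ 2 ≤ 0 := by
    by_contra hcon
    push Not at hcon
    have := mul_pos hc hcon
    linarith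
  apply Complex.ext
  · simp only [Complex.zero_re]; nlinarith [sq_nonneg (v r).re, sq_nonneg (v r).im]
  · simp only [Complex.zero_im]; nlinarith [sq_nonneg (v r).re, sq_nonneg (v r).im]

/-- coefficient of `u` in the transformed function -/
noncomputable def cA (l z : ℂ) : ℂ := (1 - z ^ 2) ^ 2 / (z * (1 + z ^ 2)) + (l - 1) * z
noncomputable def cA' (l z : ℂ) : ℂ :=
  (-1 - 5 * z ^ 2 + 5 * z ^ 4 + z ^ 6) / (z ^ 2 * (1 + z ^ 2) ^ 2) + (l - 1)
noncomputable def cB (l z : ℂ) : ℂ := (l + 1) * z - (3 + z ^ 4) / (z * (1 + z ^ 2))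
noncomputable def cB' (l z : ℂ) : ℂ :=
  (l + 1) + (3 + 9 * z ^ 2 - 3 * z ^ 4 - z ^ 6) / (z ^ 2 * (1 + z ^ 2) ^ 2)
noncomputable def cC (l z : ℂ) : ℂ :=
  (3 - 7 * z ^ 2 - 3 * z ^ 4 - z ^ 6) / (z ^ 2 * (1 + z ^ 2) ^ 2) + (l ^ 2 + 1)
noncomputable def cC' (z : ℂ) : ℂ :=
  (-6 - 18 * z ^ 2 + 22 * z ^ 4 + 2 * z ^ 6) / (z ^ 3 * (1 + z ^ 2) ^ 3)

theorem cA_deriv (l z : ℂ) (hz : z ≠ 0) (hz1 : 1 + z ^ 2 ≠ 0) :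
    HasDerivAt (cA l) (cA' l z) z := by
  have hid := hasDerivAt_id z
  have h := (((((hid.pow 2).const_sub 1).pow 2).div (hid.mul ((hid.pow 2).const_add 1))
    (mul_ne_zero hz hz1))).add (hid.const_mul (l - 1))
  refine h.congr_deriv ?_
  simp only [Pi.mul_apply, Pi.pow_apply, id, cA']
  push_cast
  field_simp
  ring

theorem cB_deriv (l z : ℂ) (hz : z ≠ 0) (hz1 : 1 + z ^ 2 ≠ 0) :
    HasDerivAt (cB l) (cB' l z) z := by
  have hid := hasDerivAt_id z
  have h := (hid.const_mul (l + 1)).sub ((((hid.pow 4).const_add 3)).div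
    (hid.mul ((hid.pow 2).const_add 1)) (mul_ne_zero hz hz1))
  refine h.congr_deriv ?_
  simp only [Pi.mul_apply, Pi.pow_apply, id, cB']
  push_cast
  field_simp
  ring

theorem cC_deriv (l z : ℂ) (hz : z ≠ 0) (hz1 : 1 + z ^ 2 ≠ 0) :
    HasDerivAt (cC l) (cC' z) z := by
  have hid := hasDerivAt_id z
  have h := (((((((hid.pow 2).const_mul 7).const_sub 3).sub ((hid.pow 4).const_mul 3)).sub
    (hid.pow 6)).div ((hid.pow 2).mul (((hid.pow 2).const_add 1).pow 2))
    (mul_ne_zero (pow_ne_zero 2 hz) (pow_ne_zero 2 hz1)))).add_const (l ^ 2 + 1)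
  refine h.congr_deriv ?_
  simp only [Pi.mul_apply, Pi.sub_apply, Pi.pow_apply, id, cC']
  push_cast
  field_simp
  ring

theorem alg1_s12 (l z u u1 u2 : ℂ) (hz : z ≠ 0) (hz1 : 1 + z ^ 2 ≠ 0)
    (ode : -(1 - z ^ 2) * u2 - (2 * (1 - z ^ 2) / z) * u1 + 2 * l * z * u1
      + ((2 * (1 - 6 * z ^ 2 + z ^ 4) / (1 + z ^ 2) ^ 2) / z ^ 2) * u + l * (l + 1) * u = 0) :
    (-2 * z) * u1 + (1 - z ^ 2) * u2 - (cA' l z * u + cA l z * u1) = cB l z * u1 + cC l z * u := by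
  have e : (1 - z ^ 2) * u2 = - (2 * (1 - z ^ 2) / z) * u1 + 2 * l * z * u1
      + ((2 * (1 - 6 * z ^ 2 + z ^ 4) / (1 + z ^ 2) ^ 2) / z ^ 2) * u + l * (l + 1) * u := by
    linear_combination -ode
  rw [e]
  simp only [cA, cA', cB, cC]
  field_simp
  ring

theorem alg2_s12 (l z u u1 u2 : ℂ) (hz : z ≠ 0) (hz1 : 1 + z ^ 2 ≠ 0) (hz2 : 1 - z ^ 2 ≠ 0)
    (ode : -(1 - z ^ 2) * u2 - (2 * (1 - z ^ 2) / z) * u1 + 2 * l * z * u1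
      + ((2 * (1 - 6 * z ^ 2 + z ^ 4) / (1 + z ^ 2) ^ 2) / z ^ 2) * u + l * (l + 1) * u = 0) :
    -(1 - z ^ 2) * z ^ 2 * (cB' l z * u1 + cB l z * u2 + (cC' z * u + cC l z * u1))
      - 2 * (1 - z ^ 2) * z * (cB l z * u1 + cC l z * u)
      + 2 * z ^ 3 * l * (cB l z * u1 + cC l z * u)
      + (2 * (3 - z ^ 2) / (1 + z ^ 2)) * ((1 - z ^ 2) * u1 - cA l z * u)
      + z ^ 2 * (l * (l + 1)) * ((1 - z ^ 2) * u1 - cA l z * u) = 0 := by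
  have e : u2 = (- (2 * (1 - z ^ 2) / z) * u1 + 2 * l * z * u1
      + ((2 * (1 - 6 * z ^ 2 + z ^ 4) / (1 + z ^ 2) ^ 2) / z ^ 2) * u + l * (l + 1) * u)
      / (1 - z ^ 2) := by
    rw [eq_div_iff hz2]
    linear_combination -ode
  rw [e]
  simp only [cA, cB, cB', cC, cC']
  field_simp
  ring

theorem alg3 (l z u u1 : ℂ) (hz : z ≠ 0) (hz1 : 1 + z ^ 2 ≠ 0)
    (h0 : (1 - z ^ 2) * u1 - cA l z * u = 0) (h1 : cB l z * u1 + cC l z * u = 0) :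
    (l - 1) ^ 2 * u = 0 := by
  have e : (l - 1) ^ 2 * u = (1 - z ^ 2) * (cB l z * u1 + cC l z * u)
    - cB l z * ((1 - z ^ 2) * u1 - cA l z * u) := by
    simp only [cA, cB, cC]
    field_simp
    ring
  rw [e, h0, h1]; ring

theorem stmt_12 (lam : ℂ) (hlam : (1:ℝ)/2 ≤ lam.re) (u : ℝ → ℂ)
    (hu : ContDiffOn ℝ (⊤ : ℕ∞) u (Set.Icc 0 1))
    (hnontriv : ∃ ρ ∈ Set.Icc (0:ℝ) 1, u ρ ≠ 0)
    (hode : ∀ ρ ∈ Set.Ioo (0:ℝ) 1,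
      -(1 - (ρ:ℂ) ^ 2) * deriv (deriv u) ρ
      - (2 * (1 - (ρ:ℂ) ^ 2) / (ρ:ℂ)) * deriv u ρ
      + 2 * lam * (ρ:ℂ) * deriv u ρ
      + (((Vpot ρ : ℝ) : ℂ) / (ρ:ℂ) ^ 2) * u ρ
      + lam * (lam + 1) * u ρ = 0) :
    lam = 1 ∧ ∃ c : ℂ, c ≠ 0 ∧ ∀ ρ ∈ Set.Icc (0:ℝ) 1,
      u ρ = c * ((ρ / (1 + ρ ^ 2) : ℝ) : ℂ) := by
  have hUD : UniqueDiffOn ℝ (Set.Icc (0:ℝ) 1) := uniqueDiffOn_Icc zero_lt_one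
  have hsub : Set.Ioo (0:ℝ) 1 ⊆ Set.Icc 0 1 := Set.Ioo_subset_Icc_self
  have hcl : Set.Icc (0:ℝ) 1 ⊆ closure (Set.Ioo (0:ℝ) 1) := by
    rw [closure_Ioo zero_ne_one]
  have hz0 : ∀ r ∈ Set.Ioo (0:ℝ) 1, (r:ℂ) ≠ 0 := fun r hr => by
    exact_mod_cast hr.1.ne'
  have hz1 : ∀ r : ℝ, 1 + (r:ℂ) ^ 2 ≠ 0 := fun r => by
    have : (1 + r ^ 2 : ℝ) ≠ 0 := by positivity
    exact_mod_cast this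
  have hz2 : ∀ r ∈ Set.Ioo (0:ℝ) 1, 1 - (r:ℂ) ^ 2 ≠ 0 := fun r hr => by
    have : (1 - r ^ 2 : ℝ) ≠ 0 := by nlinarith [hr.1, hr.2]
    exact_mod_cast this
  -- derivatives up to the boundary
  set U1 : ℝ → ℂ := derivWithin u (Set.Icc 0 1) with hU1
  have hU1s : ContDiffOn ℝ (⊤ : ℕ∞) U1 (Set.Icc 0 1) := hu.derivWithin hUD (by norm_cast)
  have hU2s : ContDiffOn ℝ (⊤ : ℕ∞) (derivWithin U1 (Set.Icc 0 1)) (Set.Icc 0 1) :=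
    hU1s.derivWithin hUD (by norm_cast)
  set U2 : ℝ → ℂ := derivWithin U1 (Set.Icc 0 1) with hU2
  have huc := hu.continuousOn
  have hU1c := hU1s.continuousOn
  have hU2c := hU2s.continuousOn
  have hnhds : ∀ r ∈ Set.Ioo (0:ℝ) 1, Set.Icc (0:ℝ) 1 ∈ nhds r := fun r hr =>
    Icc_mem_nhds hr.1 hr.2
  have hdu : ∀ r ∈ Set.Icc (0:ℝ) 1, HasDerivWithinAt u (U1 r) (Set.Icc 0 1) r := fun r hr =>
    ((hu.differentiableOn (by simp)) r hr).hasDerivWithinAt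
  have hdu1 : ∀ r ∈ Set.Icc (0:ℝ) 1, HasDerivWithinAt U1 (U2 r) (Set.Icc 0 1) r := fun r hr =>
    ((hU1s.differentiableOn (by simp)) r hr).hasDerivWithinAt
  have hdu' : ∀ r ∈ Set.Ioo (0:ℝ) 1, HasDerivAt u (U1 r) r := fun r hr =>
    (hdu r (hsub hr)).hasDerivAt (hnhds r hr)
  have hdu1' : ∀ r ∈ Set.Ioo (0:ℝ) 1, HasDerivAt U1 (U2 r) r := fun r hr =>
    (hdu1 r (hsub hr)).hasDerivAt (hnhds r hr)
  have hode' : ∀ r ∈ Set.Ioo (0:ℝ) 1,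
      -(1 - (r:ℂ) ^ 2) * U2 r - (2 * (1 - (r:ℂ) ^ 2) / (r:ℂ)) * U1 r + 2 * lam * (r:ℂ) * U1 r
      + ((2 * (1 - 6 * (r:ℂ) ^ 2 + (r:ℂ) ^ 4) / (1 + (r:ℂ) ^ 2) ^ 2) / (r:ℂ) ^ 2) * u r
      + lam * (lam + 1) * u r = 0 := by
    intro r hr
    have h := hode r hr
    have e1 : deriv u r = U1 r := (hdu' r hr).deriv
    have e2 : deriv (deriv u) r = U2 r := by
      have : deriv u =ᶠ[nhds r] U1 := by
        filter_upwards [Ioo_mem_nhds hr.1 hr.2] with s hs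
        exact (hdu' s hs).deriv
      rw [this.deriv_eq, (hdu1' r hr).deriv]
    rw [e1, e2] at h
    simp only [Vpot] at h
    push_cast at h
    exact h
  -- `u 0 = 0`
  have hu0 : u 0 = 0 := by
    have hH : Set.EqOn (fun r : ℝ => -(1 - (r:ℂ) ^ 2) * (r:ℂ) ^ 2 * (1 + (r:ℂ) ^ 2) ^ 2 * U2 r
        - 2 * (1 - (r:ℂ) ^ 2) * (r:ℂ) * (1 + (r:ℂ) ^ 2) ^ 2 * U1 r
        + 2 * lam * (r:ℂ) ^ 3 * (1 + (r:ℂ) ^ 2) ^ 2 * U1 r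
        + 2 * (1 - 6 * (r:ℂ) ^ 2 + (r:ℂ) ^ 4) * u r
        + lam * (lam + 1) * (r:ℂ) ^ 2 * (1 + (r:ℂ) ^ 2) ^ 2 * u r) (fun _ => 0)
        (Set.Icc (0:ℝ) 1) := by
      refine Set.EqOn.of_subset_closure (s := Set.Ioo (0:ℝ) 1) ?_ ?_ ?_ hsub hcl
      · intro r hr
        have h := hode' r hr
        have a1 := hz0 r hr
        have a2 := hz1 r
        simp only
        have h' := congrArg (fun t => t * ((r:ℂ) ^ 2 * (1 + (r:ℂ) ^ 2) ^ 2)) h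
        simp only [zero_mul] at h'
        rw [← h']
        field_simp
      · fun_prop
      · fun_prop
    have := hH (Set.left_mem_Icc.2 zero_le_one)
    simpa using this
  -- `q = u / ρ`
  set q : ℝ → ℂ := fun r => if r = 0 then U1 0 else u r / r with hq
  have hqc : ContinuousOn q (Set.Icc 0 1) := by
    intro r hr
    by_cases h0 : r = 0
    · subst h0
      have h1 := (hasDerivWithinAt_iff_tendsto_slope.1 (hdu 0 hr))
      rw [← continuousWithinAt_sdiff_self]
      have hq0 : q 0 = U1 0 := by simp [hq]
      unfold ContinuousWithinAt
      rw [hq0]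
      refine h1.congr' ?_
      filter_upwards [self_mem_nhdsWithin] with s hs
      have hs0 : s ≠ 0 := hs.2
      simp only [slope, vsub_eq_sub, sub_zero, hu0, hq, if_neg hs0, Complex.real_smul]
      push_cast
      field_simp
    · have h1 : ContinuousWithinAt (fun r : ℝ => u r / (r:ℂ)) (Set.Icc 0 1) r :=
        (huc r hr).div (Complex.continuous_ofReal.continuousWithinAt) (by exact_mod_cast h0)
      refine h1.congr_of_eventuallyEq ?_ (by simp [hq, h0])
      filter_upwards [nhdsWithin_le_nhds (isOpen_ne.mem_nhds h0)] with s hs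
      have : s ≠ 0 := hs
      simp [hq, this]
  have hqI : ∀ r ∈ Set.Ioo (0:ℝ) 1, q r = u r / r := fun r hr => by
    simp [hq, hr.1.ne']
  -- the transformed function
  set v : ℝ → ℂ := fun r => (1 - (r:ℂ) ^ 2) * U1 r
    - (1 - (r:ℂ) ^ 2) ^ 2 / (1 + (r:ℂ) ^ 2) * q r - (lam - 1) * (r:ℂ) * u r with hv
  set p : ℝ → ℂ := fun r => ((lam + 1) * (r:ℂ) ^ 2 - (3 + (r:ℂ) ^ 4) / (1 + (r:ℂ) ^ 2)) * U1 r
    + (3 - 7 * (r:ℂ) ^ 2 - 3 * (r:ℂ) ^ 4 - (r:ℂ) ^ 6) / (1 + (r:ℂ) ^ 2) ^ 2 * q r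
    + (r:ℂ) * (lam ^ 2 + 1) * u r with hp
  have hvI : ∀ r ∈ Set.Ioo (0:ℝ) 1, v r = (1 - (r:ℂ) ^ 2) * U1 r - cA lam r * u r := by
    intro r hr
    have a1 := hz0 r hr
    have a2 := hz1 r
    simp only [hv, hqI r hr, cA]
    field_simp
    ring
  have hvc : ContinuousOn v (Set.Icc 0 1) := by
    simp only [hv]
    fun_prop (disch := intros; exact hz1 _)
  have hpc : ContinuousOn p (Set.Icc 0 1) := by
    simp only [hp]
    fun_prop (disch := intros; first | exact hz1 _ | exact pow_ne_zero 2 (hz1 _))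
  have hvd : ∀ r ∈ Set.Ioo (0:ℝ) 1, HasDerivAt v (cB lam r * U1 r + cC lam r * u r) r := by
    intro r hr
    have hA := (cA_deriv lam r (hz0 r hr) (hz1 r)).comp_ofReal
    have hid : HasDerivAt (fun s : ℝ => (1 - (s:ℂ) ^ 2)) (-2 * (r:ℂ)) r := by
      have := (((hasDerivAt_id (r:ℂ)).pow 2).const_sub 1).comp_ofReal
      refine this.congr_deriv ?_
      simp
    have h := (hid.mul (hdu1' r hr)).sub (hA.mul (hdu' r hr))
    rw [← alg1_s12 lam r _ _ _ (hz0 r hr) (hz1 r) (hode' r hr)]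
    refine h.congr_of_eventuallyEq ?_
    filter_upwards [Ioo_mem_nhds hr.1 hr.2] with s hs
    exact hvI s hs
  have hv0 := energy lam hlam v (fun r => cB lam r * U1 r + cC lam r * u r)
    (fun r => cB' lam r * U1 r + cB lam r * U2 r + (cC' r * u r + cC lam r * U1 r)) p hvd
    (by
      intro r hr
      have hB := (cB_deriv lam r (hz0 r hr) (hz1 r)).comp_ofReal
      have hC := (cC_deriv lam r (hz0 r hr) (hz1 r)).comp_ofReal
      exact (hB.mul (hdu1' r hr)).add (hC.mul (hdu' r hr)))
    hvc hpc
    (by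
      intro r hr
      have a1 := hz0 r hr
      have a2 := hz1 r
      simp only [hp, hqI r hr, cB, cC]
      field_simp
      ring)
    (by
      intro r hr
      rw [hvI r hr]
      have := alg2_s12 lam r _ _ _ (hz0 r hr) (hz1 r) (hz2 r hr) (hode' r hr)
      push_cast
      exact this)
  have hv1 : ∀ r ∈ Set.Ioo (0:ℝ) 1, cB lam r * U1 r + cC lam r * u r = 0 := by
    intro r hr
    refine (hvd r hr).unique ((hasDerivAt_const r (0:ℂ)).congr_of_eventuallyEq ?_)
    filter_upwards [Ioo_mem_nhds hr.1 hr.2] with s hs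
    exact hv0 s hs
  have hl : lam = 1 := by
    by_contra hne
    have hne' : (lam - 1) ^ 2 ≠ 0 := pow_ne_zero 2 (sub_ne_zero.2 hne)
    have hzero : Set.EqOn u (fun _ => 0) (Set.Icc (0:ℝ) 1) := by
      refine Set.EqOn.of_subset_closure (s := Set.Ioo (0:ℝ) 1) ?_ huc continuousOn_const hsub hcl
      intro r hr
      exact (mul_eq_zero.1 (alg3 lam r _ _ (hz0 r hr) (hz1 r)
        ((hvI r hr).symm.trans (hv0 r hr)) (hv1 r hr))).resolve_left hne'
    obtain ⟨r, hr, hur⟩ := hnontriv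
    exact hur (hzero hr)
  refine ⟨hl, ?_⟩
  subst hl
  have hfd : ∀ r ∈ Set.Ioo (0:ℝ) 1,
      HasDerivAt (fun s : ℝ => (1 + (s:ℂ) ^ 2) / (s:ℂ) * u s) 0 r := by
    intro r hr
    have a1 := hz0 r hr
    have a2 := hz1 r
    have a3 := hz2 r hr
    have hid := hasDerivAt_id (r:ℂ)
    have h := (((hid.pow 2).const_add 1).div hid a1).comp_ofReal.mul (hdu' r hr)
    refine h.congr_deriv ?_
    have e := (hvI r hr).symm.trans (hv0 r hr)
    have e' : U1 r = (1 - (r:ℂ) ^ 2) / ((r:ℂ) * (1 + (r:ℂ) ^ 2)) * u r := by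
      apply mul_left_cancel₀ a3
      rw [sub_eq_zero.1 e]
      simp only [cA]
      field_simp
      ring
    rw [e']
    simp only [Pi.pow_apply, id, Pi.div_apply]
    push_cast
    field_simp
    ring
  obtain ⟨c, hc⟩ : ∃ c : ℂ, ∀ r ∈ Set.Ioo (0:ℝ) 1, (1 + (r:ℂ) ^ 2) / (r:ℂ) * u r = c :=
    isOpen_Ioo.exists_is_const_of_deriv_eq_zero isPreconnected_Ioo
      (fun r hr => (hfd r hr).differentiableAt.differentiableWithinAt)
      (fun r hr => (hfd r hr).deriv)
  have hfin : Set.EqOn u (fun r => c * ((r / (1 + r ^ 2) : ℝ) : ℂ)) (Set.Icc (0:ℝ) 1) := by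
    refine Set.EqOn.of_subset_closure (s := Set.Ioo (0:ℝ) 1) ?_ huc ?_ hsub hcl
    · intro r hr
      have a1 := hz0 r hr
      have a2 := hz1 r
      simp only [← hc r hr]
      push_cast
      field_simp
    · push_cast
      fun_prop (disch := intros; exact hz1 _)
  refine ⟨c, ?_, hfin⟩
  rintro rfl
  obtain ⟨r, hr, hur⟩ := hnontriv
  apply hur
  rw [hfin hr]
  simp
end
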